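/- Every 5-vertex nondegenerate simplex with vertices among the vertices of Δ^1 × Δ^1 × Δ^2 has an exterior facet, and its class (4! times its volume in reduced coordinates) is at most 2. -/

import Mathlib

/-- A vertex of `Π*_{2,1} = Δ¹ × Δ¹ × Δ²` in standard coordinates: a 0/1 vector with
exactly one 1 in each of the three factors (of sizes 2, 2, 3). -/
def IsVertex21 (x : Fin 2 ⊕ (Fin 2 ⊕ Fin 3) → ℝ) : Prop :=
  (∀ z, x z = 0 ∨ x z = 1) ∧
    x (Sum.inl 0) + x (Sum.inl 1) = 1 ∧
    x (Sum.inr (Sum.inl 0)) + x (Sum.inr (Sum.inl 1)) = 1 ∧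
    x (Sum.inr (Sum.inr 0)) + x (Sum.inr (Sum.inr 1)) + x (Sum.inr (Sum.inr 2)) = 1

/-- The matrix `[1|M_v]` of a 5-vertex simplex in reduced coordinates (dropping the last
coordinate of each factor); the class of the simplex is `|det|`, i.e. `4!` times its
volume in reduced coordinates. -/
def classMat21 (w : Fin 5 → (Fin 2 ⊕ (Fin 2 ⊕ Fin 3) → ℝ)) : Matrix (Fin 5) (Fin 5) ℝ :=
  Matrix.of fun r => ![1, w r (Sum.inl 0), w r (Sum.inr (Sum.inl 0)),
    w r (Sum.inr (Sum.inr 0)), w r (Sum.inr (Sum.inr 1))]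

/-!
The entries of the three triangle coordinates over the five vertices sum to `5 < 2 * 3`, so one of
these coordinates vanishes at all but one vertex; the remaining four vertices lie in a facet that is
a 3-cube. Expanding the determinant along that coordinate bounds the class of the simplex by the
class of four vertices of the 3-cube. Rescaling the coordinates from `[0, 1]` to `[-1, 1]`
multiplies the latter by `2 ^ 3`, and Hadamard's inequality bounds the result by `√4 ^ 4 = 2 ^ 4`.
-/

section Determinants

open Matrix

variable {n : ℕ}

theorem abs_det_le_prod_norm_row (A : Matrix (Fin n) (Fin n) ℝ) :
    |A.det| ≤ ∏ i, ‖WithLp.toLp 2 (A i)‖ := by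
  have : Fact (Module.finrank ℝ (EuclideanSpace ℝ (Fin n)) = n) := ⟨finrank_euclideanSpace_fin⟩
  let b := EuclideanSpace.basisFun (Fin n) ℝ
  have hdet : b.toBasis.det (fun i => WithLp.toLp 2 (A i)) = A.det := by
    rw [Module.Basis.det_apply, ← det_transpose A]
    rfl
  rw [← hdet, ← b.toBasis.orientation.volumeForm_robust b rfl]
  exact Orientation.abs_volumeForm_apply_le _ _

theorem abs_det_le_sqrt_pow_of_abs_le_one {A : Matrix (Fin n) (Fin n) ℝ}
    (hA : ∀ i j, |A i j| ≤ 1) : |A.det| ≤ √n ^ n := by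
  have hrow (i : Fin n) : ‖WithLp.toLp 2 (A i)‖ ≤ √n := by
    rw [EuclideanSpace.norm_eq]
    refine Real.sqrt_le_sqrt ?_
    calc ∑ j, ‖A i j‖ ^ 2 ≤ ∑ _j : Fin n, (1 : ℝ) :=
          Finset.sum_le_sum fun j _ => pow_le_one₀ (norm_nonneg _) (hA i j)
      _ = n := by simp
  calc |A.det| ≤ ∏ i, ‖WithLp.toLp 2 (A i)‖ := abs_det_le_prod_norm_row A
    _ ≤ ∏ _i : Fin n, √n := Finset.prod_le_prod (fun _ _ => norm_nonneg _) fun i _ => hrow i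
    _ = √n ^ n := by simp

theorem det_cons_one_two_mul_sub_one {R : Type*} [CommRing R]
    {A : Matrix (Fin (n + 1)) (Fin (n + 1)) R} (hone : ∀ r, A r 0 = 1) :
    (of fun r => Fin.cons 1 fun c : Fin n => 2 * A r c.succ - 1 :
      Matrix (Fin (n + 1)) (Fin (n + 1)) R).det = 2 ^ n * A.det := by
  let s : Fin (n + 1) → R := Fin.cons 1 fun _ => 2
  let t : Fin (n + 1) → R := Fin.cons 0 fun _ => -1
  calc _ = (of fun r c => s c * A r c).det := by
        rw [← det_transpose, ← det_transpose (of fun r c => s c * A r c)]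
        refine det_eq_of_forall_row_eq_smul_add_const t 0 rfl fun c r => ?_
        cases c using Fin.cases <;> simp [s, t, hone, sub_eq_add_neg]
    _ = 2 ^ n * A.det := by simp [det_mul_row, s, Fin.prod_univ_succ]

theorem two_pow_mul_abs_det_le_of_mem_Icc {A : Matrix (Fin (n + 1)) (Fin (n + 1)) ℝ}
    (hone : ∀ r, A r 0 = 1) (hA : ∀ r c, A r (Fin.succ c) ∈ Set.Icc 0 1) :
    2 ^ n * |A.det| ≤ √(n + 1 : ℕ) ^ (n + 1) := by
  rw [← abs_of_pos (show (0 : ℝ) < 2 ^ n by positivity), ← abs_mul,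
    ← det_cons_one_two_mul_sub_one hone]
  refine abs_det_le_sqrt_pow_of_abs_le_one fun r c => ?_
  cases c using Fin.cases with
  | zero => simp
  | succ c =>
    obtain ⟨h₀, h₁⟩ := hA r c
    simp only [of_apply, Fin.cons_succ, abs_le]
    constructor <;> linarith

theorem abs_det_le_two_of_mem_Icc {A : Matrix (Fin 4) (Fin 4) ℝ}
    (hone : ∀ r, A r 0 = 1) (hA : ∀ r c, A r (Fin.succ c) ∈ Set.Icc 0 1) : |A.det| ≤ 2 := by
  have hbound : 2 ^ 3 * |A.det| ≤ √4 ^ 4 := by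
    exact_mod_cast two_pow_mul_abs_det_le_of_mem_Icc hone hA
  have hsqrt : (√4 : ℝ) ^ 4 = 2 ^ 4 := by
    rw [show (4 : ℝ) = 2 ^ 2 by norm_num, Real.sqrt_sq zero_le_two]
  linarith

theorem det_updateCol_of_eq_zero_off {R : Type*} [CommRing R]
    (A : Matrix (Fin (n + 1)) (Fin (n + 1)) R) (j : Fin (n + 1)) {v : Fin (n + 1) → R}
    {i : Fin (n + 1)} (hv : ∀ r, r ≠ i → v r = 0) :
    (A.updateCol j v).det =
      (-1) ^ (i + j : ℕ) * v i * (A.submatrix i.succAbove j.succAbove).det := by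
  rw [det_succ_column _ j, Finset.sum_eq_single i (fun r _ hr => by simp [hv r hr]) (by simp),
    updateCol_self, submatrix_updateCol_succAbove]

end Determinants

section Counting

variable {ι κ R : Type*} [Fintype ι] [Semiring R] [LinearOrder R] [IsStrictOrderedRing R]

theorem exists_eq_zero_off_of_sum_lt_two [Nonempty ι] {f : ι → R} (hf : ∀ i, f i = 0 ∨ f i = 1)
    (hsum : ∑ i, f i < 2) : ∃ i₀, ∀ i, i ≠ i₀ → f i = 0 := by
  classical
  by_contra! h
  obtain ⟨a, -, ha⟩ := h (Classical.arbitrary ι)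
  obtain ⟨b, hba, hb⟩ := h a
  refine hsum.not_ge ?_
  calc (2 : R) = ∑ i ∈ {a, b}, f i := by
        rw [Finset.sum_pair hba.symm, (hf a).resolve_left ha, (hf b).resolve_left hb,
          one_add_one_eq_two]
    _ ≤ ∑ i, f i := Finset.sum_le_univ_sum_of_nonneg fun i => by
        rcases hf i with h | h <;> simp [h]

theorem exists_coord_eq_zero_off [Nonempty ι] [Fintype κ] {x : ι → κ → R}
    (hx : ∀ i k, x i k = 0 ∨ x i k = 1) (hsum : ∀ i, ∑ k, x i k = 1)
    (hcard : Fintype.card ι < 2 * Fintype.card κ) :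
    ∃ k i₀, ∀ i, i ≠ i₀ → x i k = 0 := by
  have htotal : ∑ k, ∑ i, x i k < ∑ _k : κ, (2 : R) := by
    rw [mul_comm] at hcard
    rw [Finset.sum_comm]
    simpa [hsum] using mod_cast hcard
  obtain ⟨k, -, hk⟩ := Finset.exists_lt_of_sum_lt htotal
  exact ⟨k, exists_eq_zero_off_of_sum_lt_two (fun i => hx i k) hk⟩

end Counting

section Simplex

theorem IsVertex21.mem_Icc {x : Fin 2 ⊕ (Fin 2 ⊕ Fin 3) → ℝ} (hx : IsVertex21 x)
    (z : Fin 2 ⊕ (Fin 2 ⊕ Fin 3)) : x z ∈ Set.Icc 0 1 := by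
  rcases hx.1 z with h | h <;> simp [h]

variable {w : Fin 5 → (Fin 2 ⊕ (Fin 2 ⊕ Fin 3) → ℝ)}

theorem exists_triangle_coord_eq_zero_off (hv : ∀ r, IsVertex21 (w r)) :
    ∃ k r₀, ∀ r, r ≠ r₀ → w r (Sum.inr (Sum.inr k)) = 0 :=
  exists_coord_eq_zero_off (fun r _ => (hv r).1 _)
    (fun r => (Fin.sum_univ_three _).trans (hv r).2.2.2) (by simp)

theorem classMat21_mem_Icc (hv : ∀ r, IsVertex21 (w r)) (r c : Fin 5) :
    classMat21 w r c ∈ Set.Icc 0 1 := by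
  fin_cases c
  · exact ⟨zero_le_one, le_rfl⟩
  all_goals exact (hv r).mem_Icc _

theorem exists_abs_det_updateCol_triangle_coord (hv : ∀ r, IsVertex21 (w r)) (k : Fin 3) :
    ∃ j ≠ 0, |((classMat21 w).updateCol j fun r => w r (Sum.inr (Sum.inr k))).det| =
      |(classMat21 w).det| := by
  fin_cases k
  · exact ⟨3, by decide, congrArg (|Matrix.det ·|) (Matrix.updateCol_eq_self _ _)⟩
  · exact ⟨4, by decide, congrArg (|Matrix.det ·|) (Matrix.updateCol_eq_self _ _)⟩
  · let c : Fin 5 → ℝ := ![1, 0, 0, -1, -1]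
    have hlast (r) : w r (Sum.inr (Sum.inr 2)) = ∑ i, c i • classMat21 w r i := by
      calc w r (Sum.inr (Sum.inr 2))
          = 1 - w r (Sum.inr (Sum.inr 0)) - w r (Sum.inr (Sum.inr 1)) := by
            linarith [(hv r).2.2.2]
        _ = ∑ i, c i • classMat21 w r i := by
            simp [c, classMat21, Fin.sum_univ_five, sub_eq_add_neg]
    refine ⟨3, by decide, ?_⟩
    simp only [Fin.reduceFinMk, hlast, Matrix.det_updateCol_sum]
    simp [c]

theorem abs_det_classMat21_le_two_of_eq_zero_off (hv : ∀ r, IsVertex21 (w r))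
    {k : Fin 3} {r₀ : Fin 5} (hk : ∀ r, r ≠ r₀ → w r (Sum.inr (Sum.inr k)) = 0) :
    |(classMat21 w).det| ≤ 2 := by
  obtain ⟨j, hj, hdet⟩ := exists_abs_det_updateCol_triangle_coord hv k
  have hcoord : |w r₀ (Sum.inr (Sum.inr k))| ≤ 1 := by
    obtain ⟨h₀, h₁⟩ := (hv r₀).mem_Icc (Sum.inr (Sum.inr k))
    rwa [abs_of_nonneg h₀]
  have hfacet : |((classMat21 w).submatrix r₀.succAbove j.succAbove).det| ≤ 2 :=
    abs_det_le_two_of_mem_Icc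
      (fun r => by rw [Matrix.submatrix_apply, Fin.succAbove_ne_zero_zero hj]; rfl)
      fun r c => classMat21_mem_Icc hv _ _
  calc |(classMat21 w).det|
      = |w r₀ (Sum.inr (Sum.inr k))| *
          |((classMat21 w).submatrix r₀.succAbove j.succAbove).det| := by
        rw [← hdet, det_updateCol_of_eq_zero_off _ j hk]
        simp [abs_mul]
    _ ≤ 1 * 2 := by gcongr
    _ = 2 := one_mul 2

theorem stmt16_general (w : Fin 5 → (Fin 2 ⊕ (Fin 2 ⊕ Fin 3) → ℝ))
    (hv : ∀ r, IsVertex21 (w r)) :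
    (∃ k r₀, ∀ r, r ≠ r₀ → w r (Sum.inr (Sum.inr k)) = 0) ∧ |(classMat21 w).det| ≤ 2 := by
  obtain ⟨k, r₀, hk⟩ := exists_triangle_coord_eq_zero_off hv
  exact ⟨⟨k, r₀, hk⟩, abs_det_classMat21_le_two_of_eq_zero_off hv hk⟩

end Simplex

/-- Every 5-vertex nondegenerate simplex with vertices among the vertices of
`Δ¹ × Δ¹ × Δ²` has an exterior facet (4 of its vertices share a zero coordinate),
and its class is at most 2. -/
theorem stmt16 (w : Fin 5 → (Fin 2 ⊕ (Fin 2 ⊕ Fin 3) → ℝ))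
    (hv : ∀ r, IsVertex21 (w r)) (hindep : AffineIndependent ℝ w) :
    (∃ z : Fin 2 ⊕ (Fin 2 ⊕ Fin 3), ∃ S : Finset (Fin 5),
      S.card = 4 ∧ ∀ r ∈ S, w r z = 0) ∧
    |(classMat21 w).det| ≤ 2 := by
  obtain ⟨⟨k, r₀, hk⟩, hclass⟩ := stmt16_general w hv
  exact ⟨⟨Sum.inr (Sum.inr k), {r₀}ᶜ, by simp [Finset.card_compl], by simpa using hk⟩, hclass⟩
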